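/- Let n ≥ 3 and c ∈ ℝ. Consider the two curve-germs in ℝ^{2n} (coordinates (p₁,q₁,p₂,q₂,p₃,q₃,…,pₙ,qₙ), all unlisted coordinates equal to 0): B₁(t) = (t³, −(c/3)t⁶, 0, t⁵, −t², 0, …, 0) and B₂(t) = (t³, 0, −t², 0, 0, 0, …, 0) (the class (T₇)⁵). Then Lt(B₁,B₂) = 5, while Lt(B₁) = ∞ and Lt(B₂) = ∞. -/

import Mathlib

noncomputable section

/-- The order of vanishing at `0` of a function `h : ℝ → ℝ`: the least `k ≥ 1` such that
the `k`-th derivative of `h` at `0` is nonzero, and `∞` if all derivatives vanish at `0`. -/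
def vanishOrder (h : ℝ → ℝ) : ℕ∞ :=
  sInf {k : ℕ∞ | ∃ m : ℕ, k = m ∧ 1 ≤ m ∧ iteratedDeriv m h 0 ≠ 0}

/-- The standard symplectic form `ω = ∑ dpᵢ ∧ dqᵢ` on `ℝ^{2n}`, where the coordinates are
ordered as `(p₁, q₁, …, pₙ, qₙ)` (so `pᵢ` has index `2(i-1)` and `qᵢ` has index `2(i-1)+1`). -/
def stdSymp (n : ℕ) (u v : Fin (2 * n) → ℝ) : ℝ :=
  ∑ i : Fin n,
    (u ⟨2 * i.val, by have := i.isLt; omega⟩ * v ⟨2 * i.val + 1, by have := i.isLt; omega⟩ -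
     u ⟨2 * i.val + 1, by have := i.isLt; omega⟩ * v ⟨2 * i.val, by have := i.isLt; omega⟩)

/-- A germ at `0` of a smooth Lagrangian submanifold of `(ℝ^{2n}, ω)`, given by `n` smooth
functions `H₁, …, Hₙ` vanishing at `0`, whose differentials are linearly independent at the
points of `{H₁ = ⋯ = Hₙ = 0}` near `0`, and such that `ω` vanishes on `ker DH(x)` at every
such point. -/
structure LagrangianGerm (n : ℕ) : Type where
  H : Fin n → (Fin (2 * n) → ℝ) → ℝ
  smooth : ∀ i, ContDiff ℝ (⊤ : ℕ∞) (H i)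
  zero_at_zero : ∀ i, H i 0 = 0
  lagrangian : ∃ U : Set (Fin (2 * n) → ℝ), IsOpen U ∧ 0 ∈ U ∧
    ∀ x ∈ U, (∀ i, H i x = 0) →
      LinearIndependent ℝ (fun i => fderiv ℝ (H i) x) ∧
      ∀ u v : Fin (2 * n) → ℝ, (∀ i, fderiv ℝ (H i) x u = 0) →
        (∀ i, fderiv ℝ (H i) x v = 0) → stdSymp n u v = 0

/-- The tangency order `t(f, L)` of a curve `f` to a Lagrangian submanifold-germ `L`:
the minimum over `i` of the order of vanishing at `0` of `Hᵢ ∘ f`. -/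
def tOrd {n : ℕ} (f : ℝ → Fin (2 * n) → ℝ) (L : LagrangianGerm n) : ℕ∞ :=
  ⨅ i : Fin n, vanishOrder (fun t => L.H i (f t))

/-- The Lagrangian tangency order `Lt(f)` of a curve `f`. -/
def Lt1 {n : ℕ} (f : ℝ → Fin (2 * n) → ℝ) : ℕ∞ :=
  ⨆ L : LagrangianGerm n, tOrd f L

/-- The Lagrangian tangency order `Lt(f, g)` of a multi-germ of two curves. -/
def Lt2 {n : ℕ} (f g : ℝ → Fin (2 * n) → ℝ) : ℕ∞ :=
  ⨆ L : LagrangianGerm n, min (tOrd f L) (tOrd g L)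

/-- The Lagrangian tangency order `Lt(f, g, h)` of a multi-germ of three curves. -/
def Lt3 {n : ℕ} (f g h : ℝ → Fin (2 * n) → ℝ) : ℕ∞ :=
  ⨆ L : LagrangianGerm n, min (tOrd f L) (min (tOrd g L) (tOrd h L))

/-!
Let `T` be the tangent space at `0` of a Lagrangian germ `L = {H = 0}`. The Poisson brackets
`{Hᵢ, Hⱼ}` vanish on `L`, and differentiating them along `T` shows that the Hessians of the `Hᵢ`
define a symmetric cubic form on `T`. If a curve `t²a + t³b + t⁵d + O(t⁶)` has contact of order
greater than `5` with `L`, then `a, b ∈ T` and the coefficient of `t⁵` gives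
`dHᵢ(d) = -D²Hᵢ(b, a)`. For two such curves with data `(a, b, d)` and `(a', b, d')`, the symmetry
of the cubic form at `(a, a', b)` therefore reads `ω(a', d) = ω(a, d')`. The two branches have
`a = -∂/∂p₃`, `d = ∂/∂q₂` and `a' = -∂/∂p₂`, `d' = 0`, for which this fails.

Conversely, `{q = 0}` contains `B₂` and has contact of order `5` or more with `B₁`, while `B₁` lies
on the graph `q = dS(p)` of a cubic polynomial `S`.
-/

open Asymptotics Filter Polynomial Topology

section VanishOrder

theorem le_vanishOrder_iff {h : ℝ → ℝ} {k : ℕ∞} :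
    k ≤ vanishOrder h ↔ ∀ m : ℕ, 1 ≤ m → m < k → iteratedDeriv m h 0 = 0 := by
  simp only [vanishOrder, le_sInf_iff, Set.mem_ofPred_eq]
  constructor
  · intro hk m hm hmk
    by_contra hne
    exact hmk.not_ge (hk m ⟨m, rfl, hm, hne⟩)
  · rintro hk _ ⟨m, rfl, hm, hne⟩
    by_contra hmk
    exact hne (hk m hm (not_le.1 hmk))

theorem vanishOrder_zero : vanishOrder (fun _ => 0) = ⊤ :=
  top_le_iff.1 <| le_vanishOrder_iff.2 fun m _ _ => by simp

theorem le_vanishOrder_const_mul_pow (a : ℝ) (N : ℕ) : N ≤ vanishOrder fun t => a * t ^ N := by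
  refine le_vanishOrder_iff.2 fun m _ hmN => ?_
  have hsub : N - m ≠ 0 := Nat.sub_ne_zero_of_lt (by exact_mod_cast hmN)
  simp [iteratedDeriv_const_mul_field, zero_pow hsub]

theorem isLittleO_pow_of_lt_vanishOrder {h : ℝ → ℝ} {m : ℕ} (hh : ContDiff ℝ m h) (h0 : h 0 = 0)
    (hm : m < vanishOrder h) : h =o[𝓝 0] fun t => t ^ m := by
  have hderiv (k : ℕ) (hk : k ≤ m) : iteratedDeriv k h 0 = 0 := by
    rcases k.eq_zero_or_pos with rfl | hpos
    · simpa using h0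
    · exact le_vanishOrder_iff.1 le_rfl k hpos (lt_of_le_of_lt (by exact_mod_cast hk) hm)
  have htaylor (t : ℝ) : taylorWithinEval h m Set.univ 0 t = 0 := by
    rw [taylor_within_apply]
    refine Finset.sum_eq_zero fun k hk => ?_
    rw [iteratedDerivWithin_univ, hderiv k (Finset.mem_range_succ_iff.1 hk), smul_zero]
  simpa [htaylor] using taylor_isLittleO_univ (x₀ := 0) hh

end VanishOrder

section Taylor

section Polynomial

variable {𝕜 : Type*} [NontriviallyNormedField 𝕜]

theorem apply_zero_eq_zero_of_isLittleO_pow {f : 𝕜 → 𝕜} {m : ℕ} (hf : ContinuousAt f 0)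
    (hfm : f =o[𝓝[≠] 0] fun t => t ^ m) : f 0 = 0 := by
  have hpow : (fun t : 𝕜 => t ^ m) =O[𝓝[≠] 0] fun _ => (1 : 𝕜) :=
    ((continuous_pow m).continuousAt.mono_left nhdsWithin_le_nhds).isBigO_one 𝕜
  exact tendsto_nhds_unique (hf.mono_left nhdsWithin_le_nhds)
    ((isLittleO_one_iff 𝕜).1 (hfm.trans_isBigO hpow))

theorem coeff_eq_zero_of_isLittleO_pow {p : 𝕜[X]} {m k : ℕ}
    (hp : (fun t => p.eval t) =o[𝓝[≠] 0] fun t => t ^ m) (hk : k ≤ m) : p.coeff k = 0 := by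
  induction m generalizing p k with
  | zero =>
    rw [Nat.le_zero.1 hk, coeff_zero_eq_eval_zero]
    exact apply_zero_eq_zero_of_isLittleO_pow p.continuous.continuousAt hp
  | succ m ih =>
    have hp0 : p.coeff 0 = 0 := by
      rw [coeff_zero_eq_eval_zero]
      exact apply_zero_eq_zero_of_isLittleO_pow p.continuous.continuousAt hp
    rcases k with _ | k
    · exact hp0
    · rw [← coeff_divX]
      refine ih ?_ (Nat.le_of_succ_le_succ hk)
      have hquot := (isBigO_refl (fun t : 𝕜 => t⁻¹) (𝓝[≠] 0)).mul_isLittleO hp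
      refine hquot.congr' ?_ ?_ <;> filter_upwards [self_mem_nhdsWithin] with t ht
      · rw [← congrArg (eval t) (X_mul_divX_add p), hp0]
        simp [inv_mul_cancel_left₀ ht]
      · rw [pow_succ', inv_mul_cancel_left₀ ht]

end Polynomial

variable {E F : Type*} [NormedAddCommGroup E] [NormedSpace ℝ E]
  [NormedAddCommGroup F] [NormedSpace ℝ F] [CompleteSpace F]

theorem isBigO_sub_sum_iteratedFDeriv {f : E → F} {m : ℕ} (hf : ContDiff ℝ (m + 1) f) (x₀ : E) :
    (fun x => f (x₀ + x) -
      ∑ k ∈ Finset.range (m + 1), (k.factorial : ℝ)⁻¹ • iteratedFDeriv ℝ k f x₀ fun _ => x)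
      =O[𝓝 0] fun x => ‖x‖ ^ (m + 1) := by
  have hcont : Continuous fun x => iteratedFDeriv ℝ (m + 1) f (x₀ + x) :=
    (hf.continuous_iteratedFDeriv (by norm_cast)).comp (continuous_const_add x₀)
  obtain ⟨C, hC⟩ := ((hcont.continuousAt (x := 0)).isBigO_one ℝ).bound
  obtain ⟨r, hr, hball⟩ := Metric.eventually_nhds_iff_ball.1 hC
  refine IsBigO.of_bound ((m.factorial : ℝ)⁻¹ * C) ?_
  filter_upwards [Metric.ball_mem_nhds 0 hr] with x hx
  have hintegrand (t : ℝ) (ht : t ∈ Set.uIoc (0 : ℝ) 1) :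
      ‖(1 - t) ^ m • iteratedFDeriv ℝ (m + 1) f (x₀ + t • x) fun _ => x‖ ≤ C * ‖x‖ ^ (m + 1) := by
    rw [Set.uIoc_of_le zero_le_one] at ht
    have htx : t • x ∈ Metric.ball (0 : E) r :=
      (convex_ball (0 : E) r).smul_mem_of_zero_mem (Metric.mem_ball_self hr) hx ⟨ht.1.le, ht.2⟩
    have hweight : |(1 - t) ^ m| ≤ 1 := by
      rw [abs_of_nonneg (pow_nonneg (by linarith [ht.2]) m)]
      exact pow_le_one₀ (by linarith [ht.2]) (by linarith [ht.1])
    calc _ = |(1 - t) ^ m| * ‖iteratedFDeriv ℝ (m + 1) f (x₀ + t • x) fun _ => x‖ := norm_smul _ _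
      _ ≤ 1 * ‖iteratedFDeriv ℝ (m + 1) f (x₀ + t • x) fun _ => x‖ := by gcongr
      _ ≤ ‖iteratedFDeriv ℝ (m + 1) f (x₀ + t • x)‖ * ‖x‖ ^ (m + 1) := by
        simpa using (iteratedFDeriv ℝ (m + 1) f (x₀ + t • x)).le_opNorm fun _ => x
      _ ≤ C * ‖x‖ ^ (m + 1) := by
        gcongr
        simpa using hball _ htx
  have hint := intervalIntegral.norm_integral_le_of_norm_le_const hintegrand
  rw [map_add_eq_sum_add_integral_iteratedFDeriv fun _ _ => hf.contDiffAt, add_sub_cancel_left,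
    norm_smul, norm_inv, RCLike.norm_natCast, norm_pow, norm_norm, mul_assoc]
  gcongr
  simpa using hint

theorem isBigO_sub_quadratic_taylor {f : E → F} (hf : ContDiff ℝ 3 f) (x₀ : E) :
    (fun x => f (x₀ + x) -
      (f x₀ + fderiv ℝ f x₀ x + (2⁻¹ : ℝ) • fderiv ℝ (fderiv ℝ f) x₀ x x))
      =O[𝓝 0] fun x => ‖x‖ ^ 3 := by
  simpa [Finset.sum_range_succ, iteratedFDeriv_two_apply] using
    isBigO_sub_sum_iteratedFDeriv (f := f) (m := 2) (by exact_mod_cast hf) x₀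

end Taylor

section FiveJet

variable {E : Type*} [NormedAddCommGroup E] [NormedSpace ℝ E] {f : ℝ → E} {a b d : E} {G : E → ℝ}

/-- The polynomial curve `t²a + t³b + t⁵d`, the shape of the `5`-jets of both branches of
`(T₇)⁵`. -/
def fiveJet (a b d : E) (t : ℝ) : E := t ^ 2 • a + t ^ 3 • b + t ^ 5 • d

/-- The curve `f` has `5`-jet `t²a + t³b + t⁵d` at `0`. This is an asymptotic condition, which does
not require `f` to be differentiable away from `0`. -/
def HasFiveJet (f : ℝ → E) (a b d : E) : Prop :=
  (fun t => f t - fiveJet a b d t) =O[𝓝 0] fun t => t ^ 6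

theorem tendsto_fiveJet (a b d : E) : Tendsto (fiveJet a b d) (𝓝 0) (𝓝 0) :=
  Continuous.tendsto' (by unfold fiveJet; fun_prop) _ _ (by simp [fiveJet])

theorem isBigO_fiveJet (a b d : E) : fiveJet a b d =O[𝓝 0] fun t => t ^ 2 := by
  have hcont : ContinuousAt (fun t : ℝ => a + t • b + t ^ 3 • d) 0 := by fun_prop
  have hsmul := (isBigO_refl (fun t : ℝ => t ^ 2) (𝓝 0)).smul (hcont.isBigO_one ℝ)
  refine hsmul.congr (fun t => ?_) fun t => ?_
  · simp only [fiveJet]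
    module
  · simp

theorem HasFiveJet.apply_zero (hf : HasFiveJet f a b d) : f 0 = 0 := by
  simpa [fiveJet] using hf.eq_zero_imp.self_of_nhds (by simp)

theorem HasFiveJet.isBigO_comp_sub (hf : HasFiveJet f a b d) (hG : ContDiffAt ℝ 1 G 0) :
    (fun t => G (f t) - G (fiveJet a b d t)) =O[𝓝 0] fun t => t ^ 6 := by
  have hrem := hf.trans_tendsto (Continuous.tendsto' (continuous_pow 6) 0 0 (by simp))
  have hcurve : Tendsto f (𝓝 0) (𝓝 0) := by simpa using hrem.add (tendsto_fiveJet a b d)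
  exact (((hG.hasStrictFDerivAt one_ne_zero).isBigO_sub.comp_tendsto
    (hcurve.prodMk_nhds (tendsto_fiveJet a b d))).trans hf :)

/-- The pullback to the curve `t²a + t³b + t⁵d` of the second-order Taylor polynomial
`φ x + ½ A x x` of a function with differential `φ` and Hessian `A`. -/
def fiveJetPolynomial (φ : StrongDual ℝ E) (A : E →L[ℝ] StrongDual ℝ E) (a b d : E) : ℝ[X] :=
  C (φ a) * X ^ 2 + C (φ b) * X ^ 3 + C (2⁻¹ * A a a) * X ^ 4 + C (φ d + A b a) * X ^ 5 +
    C (2⁻¹ * A b b) * X ^ 6 + C (A d a) * X ^ 7 + C (A d b) * X ^ 8 + C (2⁻¹ * A d d) * X ^ 10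

theorem eval_fiveJetPolynomial {A : E →L[ℝ] StrongDual ℝ E} (hA : ∀ x y, A x y = A y x)
    (φ : StrongDual ℝ E) (a b d : E) (t : ℝ) :
    (fiveJetPolynomial φ A a b d).eval t =
      φ (fiveJet a b d t) + 2⁻¹ * A (fiveJet a b d t) (fiveJet a b d t) := by
  simp only [fiveJetPolynomial, fiveJet, eval_add, eval_mul, eval_C, eval_pow, eval_X, map_add,
    map_smul, add_apply, smul_apply, smul_eq_mul, hA a b, hA a d, hA b d]
  ring

theorem HasFiveJet.isLittleO_fiveJetPolynomial (hf : HasFiveJet f a b d) (hG : ContDiff ℝ 3 G)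
    (hG0 : G 0 = 0) (hGf : (fun t => G (f t)) =o[𝓝 0] fun t => t ^ 5) :
    (fun t => (fiveJetPolynomial (fderiv ℝ G 0) (fderiv ℝ (fderiv ℝ G) 0) a b d).eval t)
      =o[𝓝 0] fun t => t ^ 5 := by
  have hsymm : IsSymmSndFDerivAt ℝ G 0 :=
    hG.contDiffAt.isSymmSndFDerivAt (by simp; norm_num)
  have hsix : (fun t : ℝ => t ^ 6) =o[𝓝 0] fun t => t ^ 5 := isLittleO_pow_pow (by norm_num)
  have hcube : (fun t => ‖fiveJet a b d t‖ ^ 3) =O[𝓝 0] fun t => t ^ 6 :=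
    ((isBigO_fiveJet a b d).norm_left.pow 3).congr_right fun t => by ring
  have htaylor := ((isBigO_sub_quadratic_taylor hG 0).comp_tendsto
    (tendsto_fiveJet a b d)).trans hcube |>.trans_isLittleO hsix
  have hcurve :=
    (hf.isBigO_comp_sub (hG.of_le (by norm_num)).contDiffAt).trans_isLittleO hsix
  refine ((hGf.sub hcurve).sub htaylor).congr_left fun t => ?_
  rw [eval_fiveJetPolynomial hsymm.eq]
  simp [hG0]

theorem HasFiveJet.contact_equations (hf : HasFiveJet f a b d) (hG : ContDiff ℝ 3 G)
    (hG0 : G 0 = 0) (hGf : (fun t => G (f t)) =o[𝓝 0] fun t => t ^ 5) :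
    fderiv ℝ G 0 a = 0 ∧ fderiv ℝ G 0 b = 0 ∧
      fderiv ℝ G 0 d + fderiv ℝ (fderiv ℝ G) 0 b a = 0 := by
  have hcoeff (k : ℕ) (hk : k ≤ 5) := coeff_eq_zero_of_isLittleO_pow
    ((hf.isLittleO_fiveJetPolynomial hG hG0 hGf).mono nhdsWithin_le_nhds) hk
  simp only [fiveJetPolynomial, coeff_add, coeff_C_mul, coeff_X_pow] at hcoeff
  refine ⟨?_, ?_, ?_⟩
  · simpa using hcoeff 2 (by norm_num)
  · simpa using hcoeff 3 (by norm_num)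
  · simpa using hcoeff 5 le_rfl

end FiveJet

section SymplecticLinearAlgebra

variable {E ι : Type*} [NormedAddCommGroup E] [NormedSpace ℝ E]

theorem mem_span_range_of_forall_eq_zero [Finite ι] {φ : ι → StrongDual ℝ E} {ψ : StrongDual ℝ E}
    (h : ∀ v, (∀ i, φ i v = 0) → ψ v = 0) : ψ ∈ Submodule.span ℝ (Set.range φ) := by
  have hψ : (ψ : E →ₗ[ℝ] ℝ) ∈ Submodule.span ℝ (Set.range fun i => (φ i : E →ₗ[ℝ] ℝ)) :=
    mem_span_of_iInf_ker_le_ker fun v hv => h v (by simpa using hv)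
  have hmap : Set.range (fun i => (φ i : E →ₗ[ℝ] ℝ)) =
      ContinuousLinearMap.coeLM ℝ '' Set.range φ := by
    rw [← Set.range_comp]
    rfl
  rw [hmap, Submodule.span_image] at hψ
  obtain ⟨χ, hχ, hχψ⟩ := hψ
  rwa [← ContinuousLinearMap.coe_injective hχψ]

theorem apply_mem_span_range_iff_of_isotropic [FiniteDimensional ℝ E] [Fintype ι]
    {ω : E ≃L[ℝ] StrongDual ℝ E} {φ : ι → StrongDual ℝ E}
    (hcard : 2 * Fintype.card ι ≤ Module.finrank ℝ E)
    (hiso : ∀ u v, (∀ i, φ i u = 0) → (∀ i, φ i v = 0) → ω u v = 0) {v : E} :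
    ω v ∈ Submodule.span ℝ (Set.range φ) ↔ ∀ i, φ i v = 0 := by
  let Φ : E →ₗ[ℝ] ι → ℝ := LinearMap.pi fun i => (φ i : E →ₗ[ℝ] ℝ)
  have mem_ker (w : E) : w ∈ LinearMap.ker Φ ↔ ∀ i, φ i w = 0 := by simp [Φ, funext_iff]
  have hle : (LinearMap.ker Φ).map (ω : E →ₗ[ℝ] StrongDual ℝ E) ≤
      Submodule.span ℝ (Set.range φ) := by
    rintro _ ⟨w, hw, rfl⟩
    exact mem_span_range_of_forall_eq_zero fun z hz => hiso w z ((mem_ker w).1 hw) hz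
  have hspan : Module.finrank ℝ (Submodule.span ℝ (Set.range φ)) ≤ Fintype.card ι :=
    finrank_range_le_card φ
  have hker := Φ.finrank_range_add_finrank_ker
  have hrange : Module.finrank ℝ (LinearMap.range Φ) ≤ Fintype.card ι := by
    simpa using (LinearMap.range Φ).finrank_le
  have hmap : Module.finrank ℝ ((LinearMap.ker Φ).map (ω : E →ₗ[ℝ] StrongDual ℝ E)) =
      Module.finrank ℝ (LinearMap.ker Φ) := LinearEquiv.finrank_map_eq ω.toLinearEquiv _
  rw [← Submodule.eq_of_le_of_finrank_le hle (by omega), ← mem_ker]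
  exact ω.injective.mem_set_image

end SymplecticLinearAlgebra

section LevelSet

variable {E ι : Type*} [NormedAddCommGroup E] [NormedSpace ℝ E] [CompleteSpace E] [Finite ι]

theorem apply_eq_zero_of_eventually_eq_on_levelSet {F : ι → E → ℝ} {F' : ι → StrongDual ℝ E}
    {P : E → ℝ} {P' : StrongDual ℝ E} {x₀ u : E} (hF : ∀ i, HasStrictFDerivAt (F i) (F' i) x₀)
    (hF' : LinearIndependent ℝ F') (hP : HasStrictFDerivAt P P' x₀)
    (hconst : ∀ᶠ x in 𝓝[{x | ∀ i, F i x = F i x₀}] x₀, P x = P x₀) (hu : ∀ i, F' i u = 0) :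
    P' u = 0 := by
  have := Fintype.ofFinite ι
  have hextr : IsLocalExtrOn P {x | ∀ i, F i x = F i x₀} x₀ :=
    Or.inl (hconst.mono fun x hx => hx.ge)
  obtain ⟨Λ, Λ₀, hne, hsum⟩ := hextr.exists_multipliers_of_hasStrictFDerivAt hF hP
  have hΛ₀ : Λ₀ ≠ 0 := by
    rintro rfl
    have hΛ := Fintype.linearIndependent_iff.1 hF' Λ (by simpa using hsum)
    exact hne (Prod.ext (funext hΛ) rfl)
  simpa [hu, hΛ₀] using congrArg (· u) hsum

end LevelSet

section PoissonBracket

variable {E ι : Type*} [NormedAddCommGroup E] [NormedSpace ℝ E] {ω : E ≃L[ℝ] StrongDual ℝ E}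

/-- The Poisson bracket `{F, G} = dF(X_G)` attached to a nondegenerate bilinear form `ω`, where the
Hamiltonian vector field is normalised by `ω(X_G, ·) = dG`. -/
def poissonBracket (ω : E ≃L[ℝ] StrongDual ℝ E) (F G : E → ℝ) (x : E) : ℝ :=
  fderiv ℝ F x (ω.symm (fderiv ℝ G x))

theorem apply_symm_apply_eq_neg (hω : ∀ u v, ω u v = -ω v u) (φ ψ : StrongDual ℝ E) :
    φ (ω.symm ψ) = -ψ (ω.symm φ) := by
  simpa using hω (ω.symm φ) (ω.symm ψ)

theorem hasStrictFDerivAt_poissonBracket {F G : E → ℝ} {x : E} (hF : ContDiffAt ℝ 2 F x)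
    (hG : ContDiffAt ℝ 2 G x) :
    HasStrictFDerivAt (poissonBracket ω F G)
      ((fderiv ℝ F x).comp ((ω.symm : StrongDual ℝ E →L[ℝ] E).comp (fderiv ℝ (fderiv ℝ G) x)) +
        (fderiv ℝ (fderiv ℝ F) x).flip (ω.symm (fderiv ℝ G x))) x := by
  have hdF := (hF.fderiv_right (m := 1) (by norm_num)).hasStrictFDerivAt one_ne_zero
  have hdG := (hG.fderiv_right (m := 1) (by norm_num)).hasStrictFDerivAt one_ne_zero
  exact hdF.clm_apply ((ω.symm : StrongDual ℝ E →L[ℝ] E).hasStrictFDerivAt.comp x hdG)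

theorem poissonBracket_eq_zero_of_isotropic [FiniteDimensional ℝ E] [Fintype ι]
    {H : ι → E → ℝ} {x : E} (hcard : 2 * Fintype.card ι ≤ Module.finrank ℝ E)
    (hiso : ∀ v w, (∀ i, fderiv ℝ (H i) x v = 0) → (∀ i, fderiv ℝ (H i) x w = 0) → ω v w = 0)
    (i j : ι) : poissonBracket ω (H i) (H j) x = 0 := by
  refine (apply_mem_span_range_iff_of_isotropic hcard hiso).1 ?_ i
  simpa using Submodule.subset_span (Set.mem_range_self j)

theorem fderiv_fderiv_apply_symm_comm [CompleteSpace E] [Finite ι] {H : ι → E → ℝ} {x₀ u : E}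
    (hω : ∀ v w, ω v w = -ω w v) (hH : ∀ i, ContDiffAt ℝ 2 (H i) x₀)
    (hind : LinearIndependent ℝ fun i => fderiv ℝ (H i) x₀)
    (hbracket : ∀ i j, ∀ᶠ x in 𝓝[{x | ∀ k, H k x = H k x₀}] x₀, poissonBracket ω (H i) (H j) x = 0)
    (hu : ∀ i, fderiv ℝ (H i) x₀ u = 0) (i j : ι) :
    fderiv ℝ (fderiv ℝ (H i)) x₀ u (ω.symm (fderiv ℝ (H j) x₀)) =
      fderiv ℝ (fderiv ℝ (H j)) x₀ u (ω.symm (fderiv ℝ (H i) x₀)) := by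
  have hzero : poissonBracket ω (H i) (H j) x₀ = 0 :=
    (hbracket i j).self_of_nhdsWithin fun _ => rfl
  have hderiv := apply_eq_zero_of_eventually_eq_on_levelSet
    (fun i => (hH i).hasStrictFDerivAt two_ne_zero) hind
    (hasStrictFDerivAt_poissonBracket (ω := ω) (hH i) (hH j))
    ((hbracket i j).mono fun x hx => hx.trans hzero.symm) hu
  have hanti := apply_symm_apply_eq_neg hω (fderiv ℝ (H i) x₀) (fderiv ℝ (fderiv ℝ (H j)) x₀ u)
  simp only [add_apply, ContinuousLinearMap.comp_apply, ContinuousLinearEquiv.coe_coe,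
    ContinuousLinearMap.flip_apply, hanti] at hderiv
  linarith

end PoissonBracket

section Coordinates

variable {n : ℕ}

/-- The index of the coordinate `pᵢ` of `ℝ^{2n}`, with `i` counted from `0`. -/
def pIdx (i : Fin n) : Fin (2 * n) := ⟨2 * i, by omega⟩

/-- The index of the coordinate `qᵢ` of `ℝ^{2n}`, with `i` counted from `0`. -/
def qIdx (i : Fin n) : Fin (2 * n) := ⟨2 * i + 1, by omega⟩

theorem val_pIdx (i : Fin n) : (pIdx i : ℕ) = 2 * i := rfl

theorem val_qIdx (i : Fin n) : (qIdx i : ℕ) = 2 * i + 1 := rfl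

@[simp]
theorem pIdx_inj {i j : Fin n} : pIdx i = pIdx j ↔ i = j := by
  simp [pIdx, Fin.ext_iff]

@[simp]
theorem qIdx_inj {i j : Fin n} : qIdx i = qIdx j ↔ i = j := by
  simp [qIdx, Fin.ext_iff]

@[simp]
theorem pIdx_ne_qIdx (i j : Fin n) : pIdx i ≠ qIdx j := by
  simp only [pIdx, qIdx, ne_eq, Fin.mk.injEq]
  omega

theorem eq_pIdx_or_eq_qIdx (j : Fin (2 * n)) : ∃ i, j = pIdx i ∨ j = qIdx i := by
  refine ⟨⟨j / 2, by omega⟩, ?_⟩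
  simp only [pIdx, qIdx, Fin.ext_iff]
  omega

theorem ext_pIdx_qIdx {α : Type*} {x y : Fin (2 * n) → α} (hp : ∀ i, x (pIdx i) = y (pIdx i))
    (hq : ∀ i, x (qIdx i) = y (qIdx i)) : x = y := by
  funext j
  obtain ⟨i, rfl | rfl⟩ := eq_pIdx_or_eq_qIdx j
  exacts [hp i, hq i]

theorem stdSymp_eq_sum (u v : Fin (2 * n) → ℝ) :
    stdSymp n u v = ∑ i, (u (pIdx i) * v (qIdx i) - u (qIdx i) * v (pIdx i)) := rfl

theorem stdSymp_antisymm (u v : Fin (2 * n) → ℝ) : stdSymp n u v = -stdSymp n v u := by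
  rw [stdSymp_eq_sum, stdSymp_eq_sum, ← Finset.sum_neg_distrib]
  exact Finset.sum_congr rfl fun i _ => by ring

@[simp]
theorem stdSymp_single_qIdx (u : Fin (2 * n) → ℝ) (i : Fin n) :
    stdSymp n u (Pi.single (qIdx i) 1) = u (pIdx i) := by
  simp [stdSymp_eq_sum, Pi.single_apply]

@[simp]
theorem stdSymp_single_pIdx (u : Fin (2 * n) → ℝ) (i : Fin n) :
    stdSymp n u (Pi.single (pIdx i) 1) = -u (qIdx i) := by
  simp [stdSymp_eq_sum, Pi.single_apply]

variable (n) in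
/-- The standard symplectic form as a continuous linear map to the dual. -/
def stdSympCLM : (Fin (2 * n) → ℝ) →L[ℝ] StrongDual ℝ (Fin (2 * n) → ℝ) :=
  let coord (j : Fin (2 * n)) : StrongDual ℝ (Fin (2 * n) → ℝ) := ContinuousLinearMap.proj j
  ∑ i, ((coord (pIdx i)).smulRight (coord (qIdx i)) - (coord (qIdx i)).smulRight (coord (pIdx i)))

@[simp]
theorem stdSympCLM_apply (u v : Fin (2 * n) → ℝ) : stdSympCLM n u v = stdSymp n u v := by
  simp [stdSympCLM, stdSymp_eq_sum]

theorem stdSympCLM_injective : Function.Injective (stdSympCLM n) := by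
  refine (injective_iff_map_eq_zero _).2 fun u hu => ext_pIdx_qIdx (fun i => ?_) fun i => ?_
  · simpa using congrArg (· (Pi.single (qIdx i) 1)) hu
  · simpa using congrArg (· (Pi.single (pIdx i) 1)) hu

variable (n) in
/-- The isomorphism of `ℝ^{2n}` with its dual given by the standard symplectic form. -/
def stdSympEquiv : (Fin (2 * n) → ℝ) ≃L[ℝ] StrongDual ℝ (Fin (2 * n) → ℝ) :=
  (LinearEquiv.ofInjectiveOfFinrankEq (stdSympCLM n : _ →ₗ[ℝ] _) stdSympCLM_injective
    (by rw [← LinearMap.toContinuousLinearMap.finrank_eq, Subspace.dual_finrank_eq]))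
    |>.toContinuousLinearEquiv

@[simp]
theorem stdSympEquiv_apply (u v : Fin (2 * n) → ℝ) : stdSympEquiv n u v = stdSymp n u v :=
  stdSympCLM_apply u v

end Coordinates

namespace LagrangianGerm

variable {n : ℕ} (L : LagrangianGerm n)

theorem contDiff (i : Fin n) (m : ℕ) : ContDiff ℝ m (L.H i) :=
  (L.smooth i).of_le (by exact_mod_cast le_top)

theorem eventually_poissonBracket_eq_zero (i j : Fin n) :
    ∀ᶠ x in 𝓝[{x | ∀ k, L.H k x = L.H k 0}] 0,
      poissonBracket (stdSympEquiv n) (L.H i) (L.H j) x = 0 := by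
  obtain ⟨U, hU, h0, hL⟩ := L.lagrangian
  filter_upwards [nhdsWithin_le_nhds (hU.mem_nhds h0), self_mem_nhdsWithin] with x hx hzero
  have hiso := (hL x hx fun k => (hzero k).trans (L.zero_at_zero k)).2
  exact poissonBracket_eq_zero_of_isotropic (by simp) (by simpa using hiso) i j

theorem linearIndependent_fderiv : LinearIndependent ℝ fun i => fderiv ℝ (L.H i) 0 := by
  obtain ⟨U, -, h0, hL⟩ := L.lagrangian
  exact (hL 0 h0 L.zero_at_zero).1

theorem exists_sum_smul_fderiv_eq {v : Fin (2 * n) → ℝ} (hv : ∀ i, fderiv ℝ (L.H i) 0 v = 0) :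
    ∃ α : Fin n → ℝ, ∑ i, α i • fderiv ℝ (L.H i) 0 = stdSympEquiv n v := by
  obtain ⟨U, -, h0, hL⟩ := L.lagrangian
  rw [← Submodule.mem_span_range_iff_exists_fun]
  exact mem_span_range_of_forall_eq_zero fun w hw => by
    simpa using (hL 0 h0 L.zero_at_zero).2 v w hv hw

-- The Hessians of the `Hᵢ` form a bilinear map on `T₀L` with values in `ℝ^{2n} / T₀L ≅ (T₀L)*`;
-- this is the symmetry of the resulting cubic form on `T₀L`.
theorem sum_mul_hessian_comm {u v w : Fin (2 * n) → ℝ} (hu : ∀ i, fderiv ℝ (L.H i) 0 u = 0)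
    {α β : Fin n → ℝ} (hv : ∑ i, α i • fderiv ℝ (L.H i) 0 = stdSympEquiv n v)
    (hw : ∑ j, β j • fderiv ℝ (L.H j) 0 = stdSympEquiv n w) :
    ∑ i, α i * fderiv ℝ (fderiv ℝ (L.H i)) 0 u w =
      ∑ j, β j * fderiv ℝ (fderiv ℝ (L.H j)) 0 u v := by
  have hcomm := fderiv_fderiv_apply_symm_comm (ω := stdSympEquiv n)
    (by simpa using stdSymp_antisymm) (fun i => (L.contDiff i 2).contDiffAt)
    L.linearIndependent_fderiv L.eventually_poissonBracket_eq_zero hu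
  rw [← (stdSympEquiv n).symm_apply_eq] at hv hw
  simp only [← hv, ← hw, map_sum, map_smul, smul_eq_mul, Finset.mul_sum]
  rw [Finset.sum_comm]
  refine Finset.sum_congr rfl fun j _ => Finset.sum_congr rfl fun i _ => ?_
  rw [hcomm i j]
  ring

variable {L}

theorem contact_equations_of_five_lt_tOrd {f : ℝ → Fin (2 * n) → ℝ} {a b d : Fin (2 * n) → ℝ}
    (hf : ContDiff ℝ 5 f) (hjet : HasFiveJet f a b d) (hL : 5 < tOrd f L) (i : Fin n) :
    fderiv ℝ (L.H i) 0 a = 0 ∧ fderiv ℝ (L.H i) 0 b = 0 ∧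
      fderiv ℝ (L.H i) 0 d + fderiv ℝ (fderiv ℝ (L.H i)) 0 b a = 0 := by
  refine hjet.contact_equations (L.contDiff i 3) (L.zero_at_zero i) ?_
  refine isLittleO_pow_of_lt_vanishOrder (m := 5) ((L.contDiff i 5).comp hf) ?_
    (hL.trans_le (iInf_le _ i))
  simp [hjet.apply_zero, L.zero_at_zero]

theorem stdSymp_eq_of_five_lt_tOrd {f g : ℝ → Fin (2 * n) → ℝ}
    {a a' b d d' : Fin (2 * n) → ℝ} (hf : ContDiff ℝ 5 f) (hfjet : HasFiveJet f a b d)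
    (hfL : 5 < tOrd f L) (hg : ContDiff ℝ 5 g) (hgjet : HasFiveJet g a' b d')
    (hgL : 5 < tOrd g L) :
    stdSymp n a' d = stdSymp n a d' := by
  have hfcontact := contact_equations_of_five_lt_tOrd hf hfjet hfL
  have hgcontact := contact_equations_of_five_lt_tOrd hg hgjet hgL
  obtain ⟨α, hα⟩ := L.exists_sum_smul_fderiv_eq fun i => (hfcontact i).1
  obtain ⟨β, hβ⟩ := L.exists_sum_smul_fderiv_eq fun i => (hgcontact i).1
  calc stdSymp n a' d = ∑ j, β j * fderiv ℝ (L.H j) 0 d := by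
        rw [← stdSympEquiv_apply, ← hβ]
        simp
    _ = -∑ j, β j * fderiv ℝ (fderiv ℝ (L.H j)) 0 b a := by
        simp [eq_neg_of_add_eq_zero_left (hfcontact _).2.2]
    _ = -∑ i, α i * fderiv ℝ (fderiv ℝ (L.H i)) 0 b a' := by
        rw [L.sum_mul_hessian_comm (fun i => (hfcontact i).2.1) hα hβ]
    _ = ∑ i, α i * fderiv ℝ (L.H i) 0 d' := by
        simp [eq_neg_of_add_eq_zero_left (hgcontact _).2.2]
    _ = stdSymp n a d' := by
        rw [← stdSympEquiv_apply, ← hα]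
        simp

end LagrangianGerm

section GeneratingFunction

variable {n : ℕ}

variable (n) in
/-- The projection `(p, q) ↦ p`. -/
def pPart : (Fin (2 * n) → ℝ) →L[ℝ] Fin n → ℝ :=
  ContinuousLinearMap.pi fun i => ContinuousLinearMap.proj (pIdx i)

@[simp]
theorem pPart_apply (x : Fin (2 * n) → ℝ) (i : Fin n) : pPart n x i = x (pIdx i) := rfl

/-- The function `qᵢ - ∂S/∂pᵢ`, the `i`-th equation of the graph `q = dS(p)`. -/
def graphEquation (S : (Fin n → ℝ) → ℝ) (i : Fin n) (x : Fin (2 * n) → ℝ) : ℝ :=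
  x (qIdx i) - fderiv ℝ S (pPart n x) (Pi.single i 1)

variable {S : (Fin n → ℝ) → ℝ}

theorem contDiff_graphEquation (hS : ContDiff ℝ (⊤ : ℕ∞) S) (i : Fin n) :
    ContDiff ℝ (⊤ : ℕ∞) (graphEquation S i) := by
  have hdS : ContDiff ℝ (⊤ : ℕ∞) (fderiv ℝ S) := hS.fderiv_right le_rfl
  exact (contDiff_apply ℝ ℝ (qIdx i)).sub ((hdS.comp (pPart n).contDiff).clm_apply contDiff_const)

theorem fderiv_graphEquation (hS : ContDiff ℝ 2 S) (i : Fin n) (x u : Fin (2 * n) → ℝ) :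
    fderiv ℝ (graphEquation S i) x u =
      u (qIdx i) - fderiv ℝ (fderiv ℝ S) (pPart n x) (pPart n u) (Pi.single i 1) := by
  have hdS : HasFDerivAt (fderiv ℝ S) (fderiv ℝ (fderiv ℝ S) (pPart n x)) (pPart n x) :=
    ((hS.fderiv_right (m := 1) (by norm_num)).differentiable one_ne_zero _).hasFDerivAt
  have hcomp := (hdS.comp x (pPart n).hasFDerivAt).clm_apply
    (hasFDerivAt_const (Pi.single i 1 : Fin n → ℝ) x)
  have hgraph : HasFDerivAt (graphEquation S i) _ x := (hasFDerivAt_apply (qIdx i) x).sub hcomp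
  simp [hgraph.fderiv]

theorem linearIndependent_fderiv_graphEquation (hS : ContDiff ℝ 2 S) (x : Fin (2 * n) → ℝ) :
    LinearIndependent ℝ fun i => fderiv ℝ (graphEquation S i) x := by
  refine Fintype.linearIndependent_iff.2 fun g hg k => ?_
  have hvertical : pPart n (Pi.single (qIdx k) 1) = 0 := by ext i; simp
  have hk := congrArg (· (Pi.single (qIdx k) 1)) hg
  simpa [fderiv_graphEquation hS, hvertical, Pi.single_apply] using hk

theorem stdSymp_eq_zero_of_fderiv_graphEquation_eq_zero (hS : ContDiff ℝ 2 S)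
    {x u v : Fin (2 * n) → ℝ} (hu : ∀ i, fderiv ℝ (graphEquation S i) x u = 0)
    (hv : ∀ i, fderiv ℝ (graphEquation S i) x v = 0) : stdSymp n u v = 0 := by
  have hsymm : IsSymmSndFDerivAt ℝ S (pPart n x) := hS.contDiffAt.isSymmSndFDerivAt (by simp)
  have hsum (φ : StrongDual ℝ (Fin n → ℝ)) (w : Fin (2 * n) → ℝ) :
      ∑ i, w (pIdx i) * φ (Pi.single i 1) = φ (pPart n w) := by
    conv_rhs => rw [pi_eq_sum_univ' (pPart n w)]
    simp
  simp only [fderiv_graphEquation hS, sub_eq_zero] at hu hv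
  simp only [stdSymp_eq_sum, hu, hv, Finset.sum_sub_distrib, hsum, mul_comm _ (v (pIdx _)),
    hsymm.eq (pPart n u) (pPart n v), sub_self]

/-- The graph `q = dS(p)` of the differential of a function `S` with a critical point at `0`. -/
def LagrangianGerm.ofGeneratingFunction (S : (Fin n → ℝ) → ℝ) (hS : ContDiff ℝ (⊤ : ℕ∞) S)
    (hS0 : fderiv ℝ S 0 = 0) : LagrangianGerm n where
  H := graphEquation S
  smooth := contDiff_graphEquation hS
  zero_at_zero i := by simp [graphEquation, hS0]
  lagrangian :=
    have hS2 : ContDiff ℝ 2 S := hS.of_le (WithTop.coe_le_coe.2 le_top)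
    ⟨Set.univ, isOpen_univ, trivial, fun x _ _ => ⟨linearIndependent_fderiv_graphEquation hS2 x,
      fun _ _ => stdSymp_eq_zero_of_fderiv_graphEquation_eq_zero hS2⟩⟩

theorem tOrd_ofGeneratingFunction_eq_top {hS : ContDiff ℝ (⊤ : ℕ∞) S} {hS0 : fderiv ℝ S 0 = 0}
    {f : ℝ → Fin (2 * n) → ℝ}
    (hf : ∀ t i, f t (qIdx i) = fderiv ℝ S (pPart n (f t)) (Pi.single i 1)) :
    tOrd f (.ofGeneratingFunction S hS hS0) = ⊤ := by
  have hzero (i : Fin n) : (fun t => graphEquation S i (f t)) = fun _ => 0 :=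
    funext fun t => sub_eq_zero.2 (hf t i)
  simp [tOrd, LagrangianGerm.ofGeneratingFunction, hzero, vanishOrder_zero]

variable (n) in
/-- The germ of the zero section `q = 0`. -/
def LagrangianGerm.zeroSection : LagrangianGerm n :=
  .ofGeneratingFunction (fun _ => 0) contDiff_const (by simp)

theorem tOrd_zeroSection (f : ℝ → Fin (2 * n) → ℝ) :
    tOrd f (.zeroSection n) = ⨅ i, vanishOrder fun t => f t (qIdx i) := by
  simp [tOrd, LagrangianGerm.zeroSection, LagrangianGerm.ofGeneratingFunction, graphEquation]

end GeneratingFunction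

section Branches

variable (n : ℕ) (c : ℝ)

/-- The branch `B₁` of `(T₇)⁵`; its indices `0, 1, 2` are the paper's `1, 2, 3`. -/
def firstBranch (t : ℝ) : Fin (2 * (n + 3)) → ℝ :=
  fiveJet (-Pi.single (pIdx 2) 1) (Pi.single (pIdx 0) 1) (Pi.single (qIdx 1) 1) t +
    t ^ 6 • Pi.single (qIdx 0) (-(c / 3))

/-- The branch `B₂` of `(T₇)⁵`; its indices `0, 1` are the paper's `1, 2`. -/
def secondBranch : ℝ → Fin (2 * (n + 3)) → ℝ :=
  fiveJet (-Pi.single (pIdx 1) 1) (Pi.single (pIdx 0) 1) 0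

theorem firstBranch_eq_ite :
    firstBranch n c = fun (t : ℝ) (j : Fin (2 * (n + 3))) =>
      if (j : ℕ) = 0 then t ^ 3 else if (j : ℕ) = 1 then -(c / 3) * t ^ 6 else
        if (j : ℕ) = 3 then t ^ 5 else if (j : ℕ) = 4 then -t ^ 2 else 0 := by
  funext t j
  simp only [firstBranch, fiveJet, Pi.add_apply, Pi.smul_apply, Pi.neg_apply, Pi.single_apply,
    smul_eq_mul, Fin.ext_iff, val_pIdx, val_qIdx, Fin.val_zero, Fin.val_one, Fin.val_two]
  grind

theorem secondBranch_eq_ite :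
    secondBranch n = fun (t : ℝ) (j : Fin (2 * (n + 3))) =>
      if (j : ℕ) = 0 then t ^ 3 else if (j : ℕ) = 2 then -t ^ 2 else 0 := by
  funext t j
  simp only [secondBranch, fiveJet, Pi.add_apply, Pi.smul_apply, Pi.neg_apply, Pi.single_apply,
    Pi.zero_apply, smul_eq_mul, Fin.ext_iff, val_pIdx, Fin.val_zero, Fin.val_one]
  grind

variable {n} in
theorem firstBranch_qIdx (t : ℝ) (i : Fin (n + 3)) :
    firstBranch n c t (qIdx i) =
      if (i : ℕ) = 0 then -(c / 3) * t ^ 6 else if (i : ℕ) = 1 then t ^ 5 else 0 := by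
  simp only [firstBranch_eq_ite, val_qIdx]
  grind

theorem hasFiveJet_firstBranch : HasFiveJet (firstBranch n c)
    (-Pi.single (pIdx 2) 1) (Pi.single (pIdx 0) 1) (Pi.single (qIdx 1) 1) := by
  have hconst := isBigO_const_const (Pi.single (qIdx 0) (-(c / 3)) : Fin (2 * (n + 3)) → ℝ)
    (one_ne_zero (α := ℝ)) (𝓝 (0 : ℝ))
  simpa [HasFiveJet, firstBranch] using (isBigO_refl (fun t : ℝ => t ^ 6) (𝓝 0)).smul hconst

theorem hasFiveJet_secondBranch : HasFiveJet (secondBranch n)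
    (-Pi.single (pIdx 1) 1) (Pi.single (pIdx 0) 1) 0 := by
  simpa [HasFiveJet, secondBranch] using isBigO_zero _ _

theorem contDiff_firstBranch : ContDiff ℝ 5 (firstBranch n c) := by
  unfold firstBranch fiveJet
  fun_prop

theorem contDiff_secondBranch : ContDiff ℝ 5 (secondBranch n) := by
  unfold secondBranch fiveJet
  fun_prop

theorem Lt2_branches_le_five : Lt2 (firstBranch n c) (secondBranch n) ≤ 5 := by
  refine iSup_le fun L => not_lt.1 fun hL => ?_
  obtain ⟨hfirst, hsecond⟩ := lt_min_iff.1 hL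
  have hω := LagrangianGerm.stdSymp_eq_of_five_lt_tOrd
    (contDiff_firstBranch n c) (hasFiveJet_firstBranch n c) hfirst
    (contDiff_secondBranch n) (hasFiveJet_secondBranch n) hsecond
  rw [stdSymp_single_qIdx] at hω
  simp [stdSymp_eq_sum] at hω

theorem tOrd_secondBranch_zeroSection : tOrd (secondBranch n) (.zeroSection _) = ⊤ := by
  simp [tOrd_zeroSection, secondBranch, fiveJet, vanishOrder_zero]

theorem five_le_tOrd_firstBranch_zeroSection : 5 ≤ tOrd (firstBranch n c) (.zeroSection _) := by
  rw [tOrd_zeroSection]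
  refine le_iInf fun i => ?_
  simp only [firstBranch_qIdx]
  split_ifs
  · exact le_trans (by norm_num) (le_vanishOrder_const_mul_pow (-(c / 3)) 6)
  · simpa using le_vanishOrder_const_mul_pow 1 5
  · simp [vanishOrder_zero]

/-- A generating function of a Lagrangian germ containing the branch `B₁`: along `B₁` one has
`q₁ = -(c/3)p₁²`, `q₂ = -p₁p₃` and `q₃ = -p₁p₂`. -/
def firstBranchPotential (p : Fin (n + 3) → ℝ) : ℝ :=
  -(c / 9) * p 0 ^ 3 - p 0 * p 1 * p 2

theorem contDiff_firstBranchPotential : ContDiff ℝ (⊤ : ℕ∞) (firstBranchPotential n c) := by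
  unfold firstBranchPotential
  fun_prop

theorem fderiv_firstBranchPotential (p v : Fin (n + 3) → ℝ) :
    fderiv ℝ (firstBranchPotential n c) p v =
      -(c / 3) * p 0 ^ 2 * v 0 - (p 1 * p 2 * v 0 + p 0 * p 2 * v 1 + p 0 * p 1 * v 2) := by
  have hcoord (i : Fin (n + 3)) := hasFDerivAt_apply (𝕜 := ℝ) i p
  have hderiv := (((hcoord 0).pow 3).const_mul (-(c / 9))).sub
    (((hcoord 0).mul (hcoord 1)).mul (hcoord 2))
  rw [HasFDerivAt.fderiv (f := firstBranchPotential n c) hderiv]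
  simp only [sub_apply, add_apply, smul_apply, ContinuousLinearMap.proj_apply, Pi.mul_apply,
    smul_eq_mul, nsmul_eq_mul]
  ring

theorem Lt1_firstBranch : Lt1 (firstBranch n c) = ⊤ := by
  have hcrit : fderiv ℝ (firstBranchPotential n c) 0 = 0 := by
    ext v
    simp [fderiv_firstBranchPotential]
  refine top_le_iff.1 (le_iSup_of_le
    (.ofGeneratingFunction _ (contDiff_firstBranchPotential n c) hcrit) (ge_of_eq ?_))
  refine tOrd_ofGeneratingFunction_eq_top fun t i => ?_
  simp only [fderiv_firstBranchPotential, firstBranch_qIdx, pPart_apply, firstBranch_eq_ite,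
    val_pIdx, Pi.single_apply, Fin.ext_iff, Fin.val_zero, Fin.val_one, Fin.val_two]
  grind

theorem Lt1_secondBranch : Lt1 (secondBranch n) = ⊤ :=
  top_le_iff.1 (le_iSup_of_le (.zeroSection _) (tOrd_secondBranch_zeroSection n).ge)

theorem Lt2_branches : Lt2 (firstBranch n c) (secondBranch n) = 5 := by
  refine (Lt2_branches_le_five n c).antisymm (le_iSup_of_le (.zeroSection _) (le_min ?_ ?_))
  · exact five_le_tOrd_firstBranch_zeroSection n c
  · simp [tOrd_secondBranch_zeroSection]

end Branches

/-- Lagrangian tangency orders for the class `(T₇)⁵`. -/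
theorem T7_5_lagrangian_tangency_orders
    (n : ℕ) (hn : 3 ≤ n) (c : ℝ)
    (B₁ B₂ : ℝ → Fin (2 * n) → ℝ)
    (hB₁ : B₁ = fun (t : ℝ) (j : Fin (2 * n)) => if (j : ℕ) = 0 then t ^ 3 else if (j : ℕ) = 1 then -(c / 3) * t ^ 6 else if (j : ℕ) = 3 then t ^ 5 else if (j : ℕ) = 4 then -t ^ 2 else (0 : ℝ))
    (hB₂ : B₂ = fun (t : ℝ) (j : Fin (2 * n)) => if (j : ℕ) = 0 then t ^ 3 else if (j : ℕ) = 2 then -t ^ 2 else (0 : ℝ)) :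
    Lt2 B₁ B₂ = 5 ∧ Lt1 B₁ = ⊤ ∧ Lt1 B₂ = ⊤ := by
  obtain ⟨m, rfl⟩ := Nat.exists_eq_add_of_le' hn
  rw [hB₁, hB₂, ← firstBranch_eq_ite, ← secondBranch_eq_ite]
  exact ⟨Lt2_branches m c, Lt1_firstBranch m c, Lt1_secondBranch m⟩

end
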